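/- Let λ = ∞u·w₁ be a left-infinite word and ρ = w₂·v∞ a right-infinite word over a finite alphabet A, given in canonical form, where u = yz and v = zy for some word z (possibly empty) and some nonempty word y, so that p = |u| = |v| ≥ 1, and assume |w₁| ≥ |w₂|. Set m = |w₁| and M = m + p − 1. Let m̄ be the unique integer in {M, M+1, …, M+p−1} with m̄ ≡ |w₂| + |z| (mod p), write m̄ = |w₂| + |z| + dp with d a non-negative integer, and let k₀ be the least positive integer such that |z| + (d + k₀)p > M. Then for all integers k ≥ k₀ and all j ∈ {0, 1, …, p−1}, rog_{λ,ρ}(m̄ + 1 + j + pk) = M − j. -/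

import Mathlib

/-- The suffix of length `n` of the left-infinite word `⋯ (lam 2)(lam 1)(lam 0)`. -/
def lSuffix {A : Type*} (lam : ℕ → A) (n : ℕ) : List A := (List.range n).reverse.map lam

/-- The prefix of length `n` of the right-infinite word `(rho 0)(rho 1)(rho 2) ⋯`. -/
def rPrefix {A : Type*} (rho : ℕ → A) (n : ℕ) : List A := (List.range n).map rho

/-- The left overlap gap between two finite words. -/
noncomputable def logGap {A : Type*} (u v : List A) : ℕ :=
  sInf {n | ∃ x x' : List A, x.length = n ∧ x'.length = n ∧ u ++ x = x' ++ v}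

/-- The right overlap gap between two finite words. -/
noncomputable def rogGap {A : Type*} (u v : List A) : ℕ :=
  sInf {n | ∃ x x' : List A, x.length = n ∧ x'.length = n ∧ x ++ u = v ++ x'}

/-- The overlap gap between two finite words. -/
noncomputable def ogGap {A : Type*} (u v : List A) : ℕ := min (logGap u v) (rogGap u v)

/-- `lam` is the left-infinite word `∞u·w = ⋯uuuw`. -/
def IsLeftUP {A : Type*} (lam : ℕ → A) (u w : List A) : Prop :=
  ∀ k : ℕ, lSuffix lam (w.length + k * u.length) = (List.replicate k u).flatten ++ w

/-- `rho` is the right-infinite word `w·u∞ = wuuu⋯`. -/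
def IsRightUP {A : Type*} (rho : ℕ → A) (w u : List A) : Prop :=
  ∀ k : ℕ, rPrefix rho (w.length + k * u.length) = w ++ (List.replicate k u).flatten

/-- A finite word is primitive if it is nonempty and not a proper power. -/
def Primitive {A : Type*} (u : List A) : Prop :=
  u ≠ [] ∧ ∀ (t : List A) (k : ℕ), u = (List.replicate k t).flatten → k = 1

/-!
Far from their ends, both words are windows of the bi-infinite word `∞u∞`. Sliding one over the
other by a gap of at least `|w₁|` therefore compares `∞u∞` with a shift of itself, and since `u` is
primitive the two agree only if the shift is a multiple of `p`; among the gaps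
`|w₁|, …, |w₁| + p - 1` exactly one qualifies. A gap below `|w₁|` would extend the period `p` of `λ`
to the first letter of `w₁`, against canonicity.
-/

open Function

theorem periodic_of_shift_eq_on_window {α : Type*} {f : ℤ → α} {p : ℕ} (hf : Periodic f p)
    (hp : 0 < p) {s : ℤ} (c : ℤ) (h : ∀ t : ℕ, t < p → f (c + t + s) = f (c + t)) :
    Periodic f s := by
  intro i
  have hrem := Int.toNat_of_nonneg (Int.emod_nonneg (i - c) (b := p) (by omega))
  have hlt := Int.emod_lt_of_pos (i - c) (b := p) (by omega)
  have hi : i = c + ((i - c) % p).toNat + (i - c) / p * p := by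
    linarith [Int.emod_add_mul_ediv (i - c) p, mul_comm ((i - c) / p) (p : ℤ)]
  have hmul (x : ℤ) : f (x + (i - c) / p * p) = f x := hf.int_mul _ x
  rw [hi, add_right_comm, hmul, hmul]
  exact h _ (by omega)

section BiPeriodic

variable {A : Type*}

/-- The bi-infinite periodic word `∞u∞`, with an occurrence of `u` starting at position `0`. Letters
are optional, so that no inhabitant of `A` is needed when `u` is empty. -/
def biPeriodic (u : List A) (i : ℤ) : Option A := u[(i % u.length).toNat]?

theorem biPeriodic_natCast (u : List A) (i : ℕ) : biPeriodic u i = u[i % u.length]? := by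
  rw [biPeriodic, ← Int.natCast_mod, Int.toNat_natCast]

theorem biPeriodic_zero (u : List A) : biPeriodic u 0 = u.head? := by
  simp [biPeriodic, List.head?_eq_getElem?]

theorem periodic_biPeriodic (u : List A) : Periodic (biPeriodic u) u.length := fun i => by
  simp [biPeriodic]

theorem biPeriodic_append_comm (y z : List A) (i : ℤ) :
    biPeriodic (z ++ y) i = biPeriodic (y ++ z) (i + y.length) := by
  rcases eq_or_ne (y ++ z) [] with h | h
  · obtain ⟨rfl, rfl⟩ := List.append_eq_nil_iff.mp h
    rfl
  have hp : (0 : ℤ) < (y ++ z).length := mod_cast List.length_pos_iff.mpr h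
  have hrem := Int.toNat_of_nonneg (Int.emod_nonneg i hp.ne')
  have hlt := Int.emod_lt_of_pos i hp
  rw [biPeriodic, ← List.rotate_append_length_eq, List.length_rotate,
    List.getElem?_rotate (by omega), ← biPeriodic_natCast, Nat.cast_add, hrem, biPeriodic,
    biPeriodic, Int.emod_add_emod]

theorem getElem?_flatten_replicate (u : List A) {k i : ℕ} (hi : i < k * u.length) :
    (List.replicate k u).flatten[i]? = u[i % u.length]? := by
  induction k generalizing i with
  | zero => omega
  | succ k ih =>
    rw [List.replicate_succ, List.flatten_cons]
    rcases lt_or_ge i u.length with h | h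
    · rw [List.getElem?_append_left h, Nat.mod_eq_of_lt h]
    · rw [Nat.succ_mul] at hi
      rw [List.getElem?_append_right h, ih (by omega), ← Nat.mod_eq_sub_mod h]

theorem eq_flatten_replicate_of_periodic {u : List A} {g : ℕ} (hg : g ∣ u.length)
    (h : Periodic (biPeriodic u) g) :
    u = (List.replicate (u.length / g) (u.take g)).flatten := by
  have hmul := Nat.div_mul_cancel hg
  rcases Nat.eq_zero_or_pos u.length with hu | hu
  · simp [List.length_eq_zero_iff.mp hu]
  have hgu := Nat.le_of_dvd hu hg
  have hlen : (u.take g).length = g := by simpa using hgu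
  refine List.ext_getElem? fun i => ?_
  rcases lt_or_ge i u.length with hi | hi
  · have hmod : i % g < g := Nat.mod_lt _ (Nat.pos_of_dvd_of_pos hg hu)
    have hcast : (i : ℤ) = (i % g : ℕ) + (i / g : ℕ) * (g : ℤ) :=
      mod_cast (Nat.mod_add_div' i g).symm
    rw [getElem?_flatten_replicate _ (by rwa [hlen, hmul]), hlen, List.getElem?_take_of_lt hmod,
      ← Nat.mod_eq_of_lt (hmod.trans_le hgu), ← biPeriodic_natCast, ← h.nat_mul (i / g), ← hcast,
      biPeriodic_natCast, Nat.mod_eq_of_lt hi]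
  · rw [List.getElem?_eq_none hi, List.getElem?_eq_none (by simp [hgu, hmul, hi])]

theorem Primitive.length_dvd_of_periodic {u : List A} (hu : Primitive u) {s : ℤ}
    (hs : Periodic (biPeriodic u) s) : (u.length : ℤ) ∣ s := by
  have hgcd : Periodic (biPeriodic u) (Int.gcd s u.length) := by
    rw [Int.gcd_eq_gcd_ab, mul_comm s, mul_comm (u.length : ℤ)]
    exact (hs.int_mul _).add_period ((periodic_biPeriodic u).int_mul _)
  have hdvd : Int.gcd s u.length ∣ u.length := by exact_mod_cast Int.gcd_dvd_right s u.length
  have hone := hu.2 _ _ (eq_flatten_replicate_of_periodic hdvd hgcd)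
  rw [← Nat.eq_of_dvd_of_div_eq_one hdvd hone]
  exact Int.gcd_dvd_left s u.length

end BiPeriodic

section UltimatelyPeriodic

variable {A : Type*} {lam rho : ℕ → A} {u v w : List A}

theorem length_lSuffix (lam : ℕ → A) (n : ℕ) : (lSuffix lam n).length = n := by
  simp [lSuffix]

theorem length_rPrefix (rho : ℕ → A) (n : ℕ) : (rPrefix rho n).length = n := by
  simp [rPrefix]

theorem getElem?_lSuffix (lam : ℕ → A) {n i : ℕ} (hi : i < n) :
    (lSuffix lam n)[i]? = some (lam (n - 1 - i)) := by
  simp [lSuffix, hi]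

theorem getElem?_rPrefix (rho : ℕ → A) {n i : ℕ} (hi : i < n) :
    (rPrefix rho n)[i]? = some (rho i) := by
  simp [rPrefix, hi]

theorem IsLeftUP.some_eq_biPeriodic (h : IsLeftUP lam u w) (hu : u ≠ []) {b : ℕ}
    (hb : w.length ≤ b) : some (lam b) = biPeriodic u (w.length - 1 - b) := by
  have hp : b + 1 ≤ (b + 1) * u.length := Nat.le_mul_of_pos_right _ (List.length_pos_iff.mpr hu)
  have hi : w.length + (b + 1) * u.length - 1 - b < (b + 1) * u.length := by omega
  have hcast : ((w.length + (b + 1) * u.length - 1 - b : ℕ) : ℤ) =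
      w.length - 1 - b + (b + 1 : ℕ) * u.length := by
    push_cast [Nat.sub_sub, show 1 + b ≤ w.length + (b + 1) * u.length by omega]
    ring
  have hletter := congrArg (·[w.length + (b + 1) * u.length - 1 - b]?) (h (b + 1))
  rw [getElem?_lSuffix _ (by omega), List.getElem?_append_left (by simpa using hi),
    getElem?_flatten_replicate _ hi, ← biPeriodic_natCast, hcast,
    (periodic_biPeriodic u).nat_mul] at hletter
  rw [← hletter]
  congr 2
  omega

theorem IsRightUP.some_eq_biPeriodic (h : IsRightUP rho w v) (hv : v ≠ []) {a : ℕ}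
    (ha : w.length ≤ a) : some (rho a) = biPeriodic v (a - w.length) := by
  have hp : a + 1 ≤ (a + 1) * v.length := Nat.le_mul_of_pos_right _ (List.length_pos_iff.mpr hv)
  have hletter := congrArg (·[a]?) (h (a + 1))
  rw [getElem?_rPrefix _ (by omega), List.getElem?_append_right ha,
    getElem?_flatten_replicate _ (by omega), ← biPeriodic_natCast, Nat.cast_sub ha] at hletter
  exact hletter

theorem IsLeftUP.some_eq_head? (h : IsLeftUP lam u w) (hw : w ≠ []) :
    some (lam (w.length - 1)) = w.head? := by
  have hsuffix : lSuffix lam w.length = w := by simpa using h 0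
  have hletter := getElem?_lSuffix lam (List.length_pos_iff.mpr hw)
  rw [hsuffix, Nat.sub_zero] at hletter
  rw [List.head?_eq_getElem?, hletter]

end UltimatelyPeriodic

section Overlap

variable {A : Type*} {lam rho : ℕ → A} {N n : ℕ}

/-- The length-`N` suffix of `lam` and prefix of `rho` agree on their overlap when `rho` starts `n`
places before `lam`, as in the definition of the right overlap gap. Indexing both words from their
ends puts `rho a` against `lam b` exactly when `a + b + 1 = N + n`. -/
def OverlapsWithGap (lam rho : ℕ → A) (N n : ℕ) : Prop :=
  ∀ a b, a < N → b < N → a + b + 1 = N + n → rho a = lam b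

theorem exists_append_eq_append_iff_overlapsWithGap (hn : n ≤ N) :
    (∃ x x' : List A, x.length = n ∧ x'.length = n ∧
      x ++ lSuffix lam N = rPrefix rho N ++ x') ↔ OverlapsWithGap lam rho N n := by
  constructor
  · rintro ⟨x, x', hx, -, h⟩ a b ha hb hab
    have hletter := congrArg (·[a]?) h
    rw [List.getElem?_append_right (by omega),
      List.getElem?_append_left (by rwa [length_rPrefix]), getElem?_lSuffix _ (by omega),
      getElem?_rPrefix _ ha, Option.some_inj] at hletter
    rw [← hletter]
    congr 1
    omega
  · intro h
    refine ⟨rPrefix rho n, lSuffix lam n, length_rPrefix rho n, length_lSuffix lam n,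
      List.ext_getElem? fun i => ?_⟩
    simp only [List.getElem?_append, length_rPrefix]
    split_ifs with hin hiN hiN
    · rw [getElem?_rPrefix _ hin, getElem?_rPrefix _ hiN]
    · omega
    · rw [getElem?_lSuffix _ (by omega), getElem?_rPrefix _ hiN,
        h i (N - 1 - (i - n)) hiN (by omega) (by omega)]
    · rcases lt_or_ge i (N + n) with hi | hi
      · rw [getElem?_lSuffix _ (by omega), getElem?_lSuffix _ (by omega)]
        congr 2
        omega
      · rw [List.getElem?_eq_none (by rw [length_lSuffix]; omega),
          List.getElem?_eq_none (by rw [length_lSuffix]; omega)]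

theorem rogGap_eq_of_isLeast (hn : n ≤ N) (h : IsLeast {k | OverlapsWithGap lam rho N k} n) :
    rogGap (lSuffix lam N) (rPrefix rho N) = n := by
  refine IsLeast.csInf_eq ⟨(exists_append_eq_append_iff_overlapsWithGap hn).mpr h.1, fun k hk => ?_⟩
  by_contra! hkn
  exact hkn.not_ge (h.2 ((exists_append_eq_append_iff_overlapsWithGap (hkn.le.trans hn)).mp hk))

end Overlap

section Gaps

variable {A : Type*} {lam rho : ℕ → A} {w₁ w₂ y z : List A} {N n : ℕ}

theorem eq_iff_biPeriodic_shift_eq (hlam : IsLeftUP lam (y ++ z) w₁)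
    (hrho : IsRightUP rho w₂ (z ++ y)) (hne : y ++ z ≠ []) {a b : ℕ} (ha : w₂.length ≤ a)
    (hb : w₁.length ≤ b) (hab : a + b + 1 = N + n) :
    rho a = lam b ↔
      biPeriodic (y ++ z) (w₁.length - 1 - b + (N + n + y.length - w₁.length - w₂.length)) =
        biPeriodic (y ++ z) (w₁.length - 1 - b) := by
  have hne' : z ++ y ≠ [] := by simpa [and_comm] using hne
  have hshift : (a - w₂.length + y.length : ℤ) =
      w₁.length - 1 - b + (N + n + y.length - w₁.length - w₂.length) := by omega
  rw [← Option.some_inj, hrho.some_eq_biPeriodic hne' ha, hlam.some_eq_biPeriodic hne hb,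
    biPeriodic_append_comm, hshift]

theorem overlapsWithGap_of_dvd (hlam : IsLeftUP lam (y ++ z) w₁)
    (hrho : IsRightUP rho w₂ (z ++ y)) (hne : y ++ z ≠ []) (hn₁ : w₁.length ≤ n)
    (hn₂ : w₂.length ≤ n)
    (hdvd : ((y ++ z).length : ℤ) ∣ N + n + y.length - w₁.length - w₂.length) :
    OverlapsWithGap lam rho N n := by
  intro a b ha hb hab
  obtain ⟨c, hc⟩ := hdvd
  rw [eq_iff_biPeriodic_shift_eq hlam hrho hne (by omega) (by omega) hab, hc, mul_comm]
  exact (periodic_biPeriodic (y ++ z)).int_mul c _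

theorem OverlapsWithGap.dvd (h : OverlapsWithGap lam rho N n) (hlam : IsLeftUP lam (y ++ z) w₁)
    (hrho : IsRightUP rho w₂ (z ++ y)) (hprim : Primitive (y ++ z)) (hn₁ : w₁.length ≤ n)
    (hn₂ : w₂.length ≤ n) (hN : n + (y ++ z).length ≤ N) :
    ((y ++ z).length : ℤ) ∣ N + n + y.length - w₁.length - w₂.length := by
  refine hprim.length_dvd_of_periodic <| periodic_of_shift_eq_on_window (periodic_biPeriodic _)
    (List.length_pos_iff.mpr hprim.1) (w₁.length - N) fun t ht => ?_
  have hb : (w₁.length - N + t : ℤ) = w₁.length - 1 - (N - 1 - t : ℕ) := by omega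
  rw [hb, ← eq_iff_biPeriodic_shift_eq hlam hrho hprim.1 (a := n + t) (by omega) (by omega)
    (by omega)]
  exact h _ _ (by omega) (by omega) (by omega)

theorem not_overlapsWithGap_of_lt {u v : List A} (hlam : IsLeftUP lam u w₁)
    (hrho : IsRightUP rho w₂ v) (huv : v.length = u.length) (hu : u ≠ [])
    (hcan : w₁.head? ≠ u.head?) (hn : n < w₁.length)
    (hN : w₁.length + w₂.length + u.length ≤ N) : ¬ OverlapsWithGap lam rho N n := by
  intro h
  have hp : 0 < u.length := List.length_pos_iff.mpr hu
  have hv : v ≠ [] := List.length_pos_iff.mp (by omega)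
  have hw₁ : w₁ ≠ [] := List.length_pos_iff.mp (by omega)
  set m := w₁.length
  set p := u.length
  have hrho_shift : rho (N + n - m) = rho (N + n - m - p) := by
    have hcast : ((N + n - m : ℕ) - w₂.length : ℤ) =
        (N + n - m - p : ℕ) - w₂.length + v.length := by omega
    rw [← Option.some_inj, hrho.some_eq_biPeriodic hv (by omega),
      hrho.some_eq_biPeriodic hv (by omega), hcast, periodic_biPeriodic v]
  refine hcan ?_
  calc w₁.head? = some (lam (m - 1)) := (hlam.some_eq_head? hw₁).symm
    _ = some (rho (N + n - m)) := by rw [h (N + n - m) (m - 1) (by omega) (by omega) (by omega)]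
    _ = some (rho (N + n - m - p)) := by rw [hrho_shift]
    _ = some (lam (m - 1 + p)) := by
      rw [h (N + n - m - p) (m - 1 + p) (by omega) (by omega) (by omega)]
    _ = biPeriodic u (0 - p) := by
      rw [hlam.some_eq_biPeriodic hu (by omega)]
      congr 1
      omega
    _ = u.head? := by rw [(periodic_biPeriodic u).sub_eq, biPeriodic_zero]

end Gaps

theorem rog_eq_of_ult_periodic_general {A : Type*} (lam rho : ℕ → A) (u v w₁ w₂ y z : List A)
    (hu : u = y ++ z) (hv : v = z ++ y) (hlam : IsLeftUP lam u w₁) (huprim : Primitive u)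
    (hcanl : w₁ ≠ [] → w₁.head? ≠ u.head?) (hrho : IsRightUP rho w₂ v)
    (hw : w₂.length ≤ w₁.length) (N j : ℕ) (hj : j < u.length)
    (hmod : w₂.length + z.length + 1 + j ≡ N [MOD u.length])
    (hN : w₁.length + u.length + max w₂.length u.length ≤ N) :
    rogGap (lSuffix lam N) (rPrefix rho N) = w₁.length + u.length - 1 - j := by
  subst hu hv
  set p := (y ++ z).length
  have hlen : p = y.length + z.length := List.length_append
  obtain ⟨c, hc⟩ := Nat.modEq_iff_dvd.mp hmod
  push_cast at hc
  have hoverlap : OverlapsWithGap lam rho N (w₁.length + p - 1 - j) :=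
    overlapsWithGap_of_dvd hlam hrho huprim.1 (by omega) (by omega)
      ⟨c + 2, by rw [mul_add, ← hc]; omega⟩
  refine rogGap_eq_of_isLeast (by omega) ⟨hoverlap, fun n hn => ?_⟩
  rcases lt_or_ge n w₁.length with hn₁ | hn₁
  · have hcan := hcanl (List.length_pos_iff.mp (by omega))
    exact absurd hn (not_overlapsWithGap_of_lt hlam hrho (by simp [add_comm]) huprim.1 hcan hn₁
      (by omega))
  · by_contra! hlt
    obtain ⟨e, he⟩ := hn.dvd hlam hrho huprim hn₁ (by omega) (by omega)
    have hdvd : (p : ℤ) ∣ n + 1 + j - w₁.length :=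
      ⟨e - c - 1, by rw [mul_sub_one, mul_sub, ← hc, ← he]; omega⟩
    have hle := Int.le_of_dvd (by omega) hdvd
    omega

/-- For `λ = ∞u·w₁` and `ρ = w₂·v∞` in canonical form with `u = yz`, `v = zy` and
`|w₁| ≥ |w₂|`, setting `m = |w₁|`, `p = |u|` and `M = m + p - 1`, if `m̄` is the unique
integer in `{M, …, M + p - 1}` with `m̄ ≡ |w₂| + |z| (mod p)`, say `m̄ = |w₂| + |z| + d·p`,
and `k₀` is the least positive integer with `|z| + (d + k₀)·p > M`, then for all `k ≥ k₀`
and `j ∈ {0, …, p-1}` one has `rog(m̄ + 1 + j + p·k) = M - j`. -/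
theorem rog_eq_of_ult_periodic {A : Type*} [Fintype A] [Nonempty A]
    (lam rho : ℕ → A) (u v w₁ w₂ y z : List A)
    (hy : y ≠ []) (hu : u = y ++ z) (hv : v = z ++ y)
    (hlam : IsLeftUP lam u w₁) (huprim : Primitive u)
    (hcanl : w₁ ≠ [] → w₁.head? ≠ u.head?)
    (hrho : IsRightUP rho w₂ v) (hvprim : Primitive v)
    (hcanr : w₂ ≠ [] → w₂.getLast? ≠ v.getLast?)
    (hw : w₂.length ≤ w₁.length)
    (mbar d k₀ : ℕ)
    (hmbar₁ : w₁.length + u.length - 1 ≤ mbar)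
    (hmbar₂ : mbar ≤ w₁.length + u.length - 1 + (u.length - 1))
    (hmbar₃ : mbar = w₂.length + z.length + d * u.length)
    (hk₀pos : 1 ≤ k₀)
    (hk₀ : w₁.length + u.length - 1 < z.length + (d + k₀) * u.length)
    (hk₀min : ∀ k', 1 ≤ k' → w₁.length + u.length - 1 < z.length + (d + k') * u.length →
      k₀ ≤ k') :
    ∀ k, k₀ ≤ k → ∀ j, j < u.length →
      rogGap (lSuffix lam (mbar + 1 + j + u.length * k))
          (rPrefix rho (mbar + 1 + j + u.length * k)) =
        w₁.length + u.length - 1 - j := by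
  intro k hk j hj
  have hkp := Nat.mul_le_mul_left u.length hk
  have hp := Nat.le_mul_of_pos_right u.length (hk₀pos.trans hk)
  have hN : mbar + 1 + j + u.length * k =
      w₂.length + z.length + 1 + j + u.length * (d + k) := by
    rw [hmbar₃]
    ring
  rw [mul_comm] at hmbar₃
  rw [mul_comm, mul_add] at hk₀
  exact rog_eq_of_ult_periodic_general lam rho u v w₁ w₂ y z hu hv hlam huprim hcanl hrho hw _ j hj
    (by simp [hN, Nat.ModEq]) (by omega)
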